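/- Let b > 1/2 and let j ∈ ℕ satisfy j < b - 1/2. Then μ_j = (2j+1)b - j(j+1) is an eigenvalue of the fibered operator P_b(1): there exists a nonzero smooth function u : (0,∞) → ℂ with u ∈ L²((0,∞), dy) and y·u'(y) ∈ L²((0,∞), dy), such that (y - b)² u(y) - (y² u'(y))' = μ_j u(y) for all y > 0. In particular, for j = 0 one can take u(y) = y^{b-1} e^{-y}, which is a ground state with eigenvalue b. -/

import Mathlib

open MeasureTheory Real Filter

noncomputable section

/-- The fibered operator `P_b(1) f = (y-b)² f - (y² f')'` on `(0,∞)`. -/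
def Pb1 (b : ℝ) (u : ℝ → ℂ) (y : ℝ) : ℂ :=
  (((y - b) ^ 2 : ℝ) : ℂ) * u y - deriv (fun z : ℝ => (z : ℂ) ^ 2 * deriv u z) y

/-!
With `θ = y d/dy` we have `P_b = (y - b)² - θ² - θ`. Since `θ y = y θ + y`, the operators
`A_b = y - b - θ` and `B_b = y - (b - 1) + θ` satisfy `P_b = A_b B_b + b` and
`P_{b-1} = B_b A_b - (b - 1)`. Hence `A_b` carries eigenfunctions of `P_{b-1}` with eigenvalue `μ`
to eigenfunctions of `P_b` with eigenvalue `μ + 2 b - 1`. Starting from the ground state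
`y^a e^{-y}` of `P_{a+1}`, which is killed by `B_{a+1}`, `j` steps lead to an eigenfunction of
`P_{a+1+j}`, which is nonzero because each step doubles the leading coefficient. All these
functions have the form `y^a e^{-y} p(y)` with `p` a polynomial, so the ladder is climbed in the
ring of polynomials; they are square integrable as soon as `-1/2 < a`.
-/

section Ladder

open Polynomial

variable {R : Type*} [CommRing R]

/-- The Euler operator `y d/dy` conjugated by the weight `y^a e^{-y}`, acting on polynomials. -/
def weightedEuler (a : R) (p : R[X]) : R[X] :=
  (C a - X) * p + X * derivative p

/-- The operator `P_b(1)` conjugated by the weight `y^a e^{-y}`, acting on polynomials; it is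
written through the Euler operator `θ = y d/dy` by means of `(y² f')' = θ² f + θ f`. -/
def weightedFiber (a b : R) (p : R[X]) : R[X] :=
  (X - C b) ^ 2 * p - (weightedEuler a (weightedEuler a p) + weightedEuler a p)

/-- The raising operator `A_b = y - b - y d/dy` conjugated by the weight `y^a e^{-y}`. -/
def weightedRaising (a b : R) (p : R[X]) : R[X] :=
  (X - C b) * p - weightedEuler a p

/-- The lowering operator `B_b = y - (b - 1) + y d/dy` conjugated by the weight `y^a e^{-y}`. -/
def weightedLowering (a b : R) (p : R[X]) : R[X] :=
  (X - C (b - 1)) * p + weightedEuler a p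

lemma weightedRaising_C_mul (a b c : R) (p : R[X]) :
    weightedRaising a b (C c * p) = C c * weightedRaising a b p := by
  simp only [weightedRaising, weightedEuler, derivative_C_mul]
  ring

lemma weightedEuler_X_sub_C_mul (a c : R) (p : R[X]) :
    weightedEuler a ((X - C c) * p) = (X - C c) * weightedEuler a p + X * p := by
  simp only [weightedEuler, derivative_mul, derivative_X_sub_C]
  ring

lemma weightedEuler_add (a : R) (p q : R[X]) :
    weightedEuler a (p + q) = weightedEuler a p + weightedEuler a q := by
  simp only [weightedEuler, derivative_add]
  ring

lemma weightedEuler_sub (a : R) (p q : R[X]) :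
    weightedEuler a (p - q) = weightedEuler a p - weightedEuler a q := by
  simp only [weightedEuler, derivative_sub]
  ring

lemma weightedFiber_eq_raising_lowering (a b : R) (p : R[X]) :
    weightedFiber a b p = weightedRaising a b (weightedLowering a b p) + C b * p := by
  simp only [weightedFiber, weightedRaising, weightedLowering, weightedEuler_add,
    weightedEuler_X_sub_C_mul]
  simp only [C_sub, C_1]
  ring

lemma weightedFiber_sub_one_eq_lowering_raising (a b : R) (p : R[X]) :
    weightedFiber a (b - 1) p = weightedLowering a b (weightedRaising a b p) - C (b - 1) * p := by
  simp only [weightedFiber, weightedRaising, weightedLowering, weightedEuler_sub,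
    weightedEuler_X_sub_C_mul]
  simp only [C_sub, C_1]
  ring

lemma weightedFiber_weightedRaising {a b μ : R} {p : R[X]}
    (hp : weightedFiber a (b - 1) p = C μ * p) :
    weightedFiber a b (weightedRaising a b p) = C (μ + 2 * b - 1) * weightedRaising a b p := by
  have lowering_raising :
      weightedLowering a b (weightedRaising a b p) = C (μ + (b - 1)) * p := by
    rw [C_add, add_mul, ← hp, weightedFiber_sub_one_eq_lowering_raising, sub_add_cancel]
  rw [weightedFiber_eq_raising_lowering, lowering_raising, weightedRaising_C_mul, ← add_mul,
    ← C_add]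
  ring_nf

lemma weightedLowering_one (a : R) : weightedLowering a (a + 1) 1 = 0 := by
  simp [weightedLowering, weightedEuler]

lemma coeff_weightedRaising_natDegree_succ (a b : R) (p : R[X]) :
    (weightedRaising a b p).coeff (p.natDegree + 1) = 2 * p.leadingCoeff := by
  have hp : p.coeff (p.natDegree + 1) = 0 := coeff_eq_zero_of_natDegree_lt p.natDegree.lt_succ_self
  simp only [weightedRaising, weightedEuler, sub_mul, coeff_sub, coeff_add, coeff_X_mul,
    coeff_C_mul, coeff_derivative, hp, leadingCoeff]
  ring

lemma weightedRaising_ne_zero [NoZeroDivisors R] [NeZero (2 : R)] (a b : R) {p : R[X]}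
    (hp : p ≠ 0) : weightedRaising a b p ≠ 0 := by
  intro h
  have hcoeff := coeff_weightedRaising_natDegree_succ a b p
  rw [h, coeff_zero] at hcoeff
  exact mul_ne_zero two_ne_zero (leadingCoeff_ne_zero.mpr hp) hcoeff.symm

/-- The polynomial `p` for which `y^a e^{-y} p(y)` is the `j`-th eigenfunction of `P_{a+1+j}(1)`;
up to a scalar it is the Laguerre polynomial `L_j^{(2a+1)}(2y)`. -/
def ladderPoly (a : R) : ℕ → R[X]
  | 0 => 1
  | j + 1 => weightedRaising a (a + 1 + (j + 1)) (ladderPoly a j)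

lemma ladderPoly_ne_zero [IsDomain R] [NeZero (2 : R)] (a : R) : ∀ j, ladderPoly a j ≠ 0
  | 0 => one_ne_zero
  | j + 1 => weightedRaising_ne_zero _ _ (ladderPoly_ne_zero a j)

lemma weightedFiber_ladderPoly (a : R) (j : ℕ) :
    weightedFiber a (a + 1 + j) (ladderPoly a j) =
      C ((2 * j + 1) * (a + 1 + j) - j * (j + 1)) * ladderPoly a j := by
  induction j with
  | zero =>
    rw [ladderPoly, Nat.cast_zero, add_zero, weightedFiber_eq_raising_lowering,
      weightedLowering_one]
    simp [weightedRaising, weightedEuler]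
  | succ j ih =>
    have hb : a + 1 + j = a + 1 + (j + 1) - 1 := by ring
    rw [hb] at ih
    rw [ladderPoly, Nat.cast_succ, weightedFiber_weightedRaising ih]
    congr 2
    ring

end Ladder

section LaguerreFun

open Polynomial

/-- The function `y^a e^{-y} p(y)` of the real variable `y`. It is meant for `0 < y`; elsewhere
it takes the values that `Real.rpow` dictates. -/
def laguerreFun (a : ℝ) (p : ℂ[X]) (y : ℝ) : ℂ :=
  ((y ^ a * Real.exp (-y) : ℝ) : ℂ) * p.eval (y : ℂ)

lemma laguerreFun_one (a : ℝ) :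
    laguerreFun a 1 = fun y : ℝ => ((y ^ a * Real.exp (-y) : ℝ) : ℂ) := by
  funext y
  rw [laguerreFun, eval_one, mul_one]

lemma laguerreFun_add (a : ℝ) (p q : ℂ[X]) :
    laguerreFun a (p + q) = laguerreFun a p + laguerreFun a q := by
  funext y
  simp only [laguerreFun, eval_add, Pi.add_apply, mul_add]

lemma laguerreFun_monomial (a : ℝ) (k : ℕ) (c : ℂ) {y : ℝ} (hy : 0 < y) :
    laguerreFun a (monomial k c) y = c * ((y ^ (a + k) * Real.exp (-y) : ℝ) : ℂ) := by
  rw [laguerreFun, eval_monomial, rpow_add_natCast hy.ne']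
  push_cast
  ring

lemma contDiffOn_laguerreFun (a : ℝ) (p : ℂ[X]) {n : WithTop ℕ∞} :
    ContDiffOn ℝ n (laguerreFun a p) (Set.Ioi 0) := by
  intro y hy
  have hweight : ContDiffAt ℝ n (fun y : ℝ => y ^ a * Real.exp (-y)) y :=
    (contDiffAt_rpow_const_of_ne (ne_of_gt hy)).mul contDiff_neg.exp.contDiffAt
  have hpoly : ContDiff ℝ n (fun y : ℝ => p.eval (y : ℂ)) := by
    have heval : ContDiff ℂ n (fun z : ℂ => p.eval z) := by simpa using p.contDiff_aeval (𝕜 := ℂ) n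
    exact (heval.restrict_scalars ℝ).comp Complex.ofRealCLM.contDiff
  exact ((Complex.ofRealCLM.contDiff.contDiffAt.comp y hweight).mul
    hpoly.contDiffAt).contDiffWithinAt

lemma exists_laguerreFun_ne_zero (a : ℝ) {p : ℂ[X]} (hp : p ≠ 0) :
    ∃ y > (0 : ℝ), laguerreFun a p y ≠ 0 := by
  by_contra! hzero
  have hroots : (fun y : ℝ => (y : ℂ)) '' Set.Ioi 0 ⊆ {z | p.IsRoot z} := by
    rintro _ ⟨y, hy, rfl⟩
    have hweight : ((y ^ a * Real.exp (-y) : ℝ) : ℂ) ≠ 0 :=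
      Complex.ofReal_ne_zero.mpr (mul_pos (rpow_pos_of_pos hy a) (Real.exp_pos _)).ne'
    exact (mul_eq_zero.mp (hzero y hy)).resolve_left hweight
  have hinfinite := (Set.Ioi_infinite (0 : ℝ)).image Complex.ofReal_injective.injOn
  exact hp (eq_zero_of_infinite_isRoot p (hinfinite.mono hroots))

lemma hasDerivAt_laguerreFun (a : ℝ) (p : ℂ[X]) {y : ℝ} (hy : 0 < y) :
    HasDerivAt (laguerreFun a p) ((y : ℂ)⁻¹ * laguerreFun a (weightedEuler (a : ℂ) p) y) y := by
  have hrpow : HasDerivAt (fun y : ℝ => y ^ a) (a * y ^ (a - 1)) y :=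
    hasDerivAt_rpow_const (Or.inl hy.ne')
  have hexp : HasDerivAt (fun y : ℝ => Real.exp (-y)) (Real.exp (-y) * -1) y :=
    (hasDerivAt_neg y).exp
  refine ((hrpow.mul hexp).ofReal_comp.mul (p.hasDerivAt (y : ℂ)).comp_ofReal).congr_deriv ?_
  have hy' : (y : ℂ) ≠ 0 := Complex.ofReal_ne_zero.mpr hy.ne'
  simp only [laguerreFun, weightedEuler, rpow_sub_one hy.ne', eval_add, eval_mul, eval_sub, eval_C,
    eval_X, Pi.mul_apply]
  push_cast
  field_simp
  ring

lemma mul_deriv_laguerreFun (a : ℝ) (p : ℂ[X]) {y : ℝ} (hy : 0 < y) :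
    (y : ℂ) * deriv (laguerreFun a p) y = laguerreFun a (weightedEuler (a : ℂ) p) y := by
  rw [(hasDerivAt_laguerreFun a p hy).deriv,
    mul_inv_cancel_left₀ (Complex.ofReal_ne_zero.mpr hy.ne')]

lemma Pb1_laguerreFun (a b : ℝ) (p : ℂ[X]) {y : ℝ} (hy : 0 < y) :
    Pb1 b (laguerreFun a p) y = laguerreFun a (weightedFiber (a : ℂ) (b : ℂ) p) y := by
  set q := weightedEuler (a : ℂ) p
  have hflux : (fun z : ℝ => (z : ℂ) ^ 2 * deriv (laguerreFun a p) z) =ᶠ[nhds y]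
      fun z : ℝ => (z : ℂ) * laguerreFun a q z := by
    filter_upwards [Ioi_mem_nhds hy] with z hz
    rw [sq, mul_assoc, mul_deriv_laguerreFun a p hz]
  have hderiv : HasDerivAt (fun z : ℝ => (z : ℂ) * laguerreFun a q z)
      (laguerreFun a q y + laguerreFun a (weightedEuler (a : ℂ) q) y) y := by
    refine ((hasDerivAt_id y).ofReal_comp.mul (hasDerivAt_laguerreFun a q hy)).congr_deriv ?_
    simp [mul_inv_cancel_left₀ (Complex.ofReal_ne_zero.mpr hy.ne')]
  rw [Pb1, hflux.deriv_eq, hderiv.deriv]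
  simp only [laguerreFun, weightedFiber, eval_add, eval_sub, eval_mul, eval_pow, eval_X, eval_C, q]
  push_cast
  ring

lemma memLp_rpow_mul_exp_neg {a : ℝ} {q : ENNReal} (hq : q ≠ 0) (hq' : q ≠ ⊤)
    (ha : -1 < a * q.toReal) :
    MemLp (fun y : ℝ => y ^ a * Real.exp (-y)) q (volume.restrict (Set.Ioi 0)) := by
  have hmeas : AEStronglyMeasurable (fun y : ℝ => y ^ a * Real.exp (-y))
      (volume.restrict (Set.Ioi 0)) :=
    Measurable.aestronglyMeasurable (by fun_prop)
  rw [← integrable_norm_rpow_iff hmeas hq hq']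
  have hgamma := integrableOn_rpow_mul_exp_neg_mul_rpow ha one_pos (ENNReal.toReal_pos hq hq')
  refine IntegrableOn.congr_fun hgamma (fun y (hy : 0 < y) => ?_) measurableSet_Ioi
  have hnorm : ‖y ^ a * Real.exp (-y)‖ = y ^ a * Real.exp (-y) := norm_of_nonneg (by positivity)
  rw [hnorm, mul_rpow (rpow_nonneg hy.le a) (Real.exp_pos _).le, ← rpow_mul hy.le, ← Real.exp_mul,
    rpow_one, neg_mul_comm, mul_comm q.toReal]

lemma memLp_laguerreFun {a : ℝ} {q : ENNReal} (hq : q ≠ 0) (hq' : q ≠ ⊤)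
    (ha : -1 < a * q.toReal) (p : ℂ[X]) :
    MemLp (laguerreFun a p) q (volume.restrict (Set.Ioi 0)) := by
  induction p using Polynomial.induction_on' with
  | add p₁ p₂ h₁ h₂ =>
    rw [laguerreFun_add]
    exact h₁.add h₂
  | monomial k c =>
    have hak : -1 < (a + k) * q.toReal := by
      rw [add_mul]
      exact lt_add_of_lt_of_nonneg ha (by positivity)
    refine ((memLp_rpow_mul_exp_neg hq hq' hak).ofReal.const_mul c).ae_eq ?_
    filter_upwards [ae_restrict_mem measurableSet_Ioi] with y hy
    exact (laguerreFun_monomial a k c hy).symm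

end LaguerreFun

/-- `u` is an eigenfunction of `P_b(1)` with eigenvalue `μ`: it is smooth on `(0,∞)`, does not
vanish identically there, is square integrable together with `y u'`, and solves the eigenvalue
equation pointwise. -/
def IsFiberEigenfunction (b μ : ℝ) (u : ℝ → ℂ) : Prop :=
  ContDiffOn ℝ (⊤ : ℕ∞) u (Set.Ioi 0) ∧ (∃ y > (0 : ℝ), u y ≠ 0) ∧
    MemLp u 2 (volume.restrict (Set.Ioi (0 : ℝ))) ∧
    MemLp (fun y : ℝ => (y : ℂ) * deriv u y) 2 (volume.restrict (Set.Ioi (0 : ℝ))) ∧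
    ∀ y > (0 : ℝ), Pb1 b u y = (μ : ℂ) * u y

open Polynomial in
lemma isFiberEigenfunction_laguerreFun {a b μ : ℝ} {p : ℂ[X]} (ha : -1 / 2 < a) (hp : p ≠ 0)
    (h_eigen : weightedFiber (a : ℂ) (b : ℂ) p = C (μ : ℂ) * p) :
    IsFiberEigenfunction b μ (laguerreFun a p) := by
  have h_memLp (q : ℂ[X]) : MemLp (laguerreFun a q) 2 (volume.restrict (Set.Ioi 0)) :=
    memLp_laguerreFun two_ne_zero ENNReal.ofNat_ne_top (by rw [ENNReal.toReal_ofNat]; linarith) q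
  refine ⟨contDiffOn_laguerreFun a p, exists_laguerreFun_ne_zero a hp, h_memLp p, ?_, ?_⟩
  · refine (h_memLp (weightedEuler (a : ℂ) p)).ae_eq ?_
    filter_upwards [ae_restrict_mem measurableSet_Ioi] with y hy
    exact (mul_deriv_laguerreFun a p hy).symm
  · intro y hy
    rw [Pb1_laguerreFun a b p hy, h_eigen, laguerreFun, laguerreFun, eval_mul, eval_C,
      mul_left_comm]

lemma isFiberEigenfunction_ladderPoly {b : ℝ} {j : ℕ} (hj : (j : ℝ) < b - 1 / 2) :
    IsFiberEigenfunction b ((2 * (j : ℝ) + 1) * b - (j : ℝ) * ((j : ℝ) + 1))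
      (laguerreFun (b - 1 - j) (ladderPoly ((b - 1 - j : ℝ) : ℂ) j)) := by
  refine isFiberEigenfunction_laguerreFun (by linarith) (ladderPoly_ne_zero _ j) ?_
  have hb : (b : ℂ) = ((b - 1 - j : ℝ) : ℂ) + 1 + j := by
    push_cast
    ring
  have h_eigen := weightedFiber_ladderPoly ((b - 1 - j : ℝ) : ℂ) j
  rw [← hb] at h_eigen
  exact_mod_cast h_eigen

/-- for `b > 1/2` and `j < b - 1/2`, `μ_j = (2j+1)b - j(j+1)` is an
eigenvalue of `P_b(1)`; for `j = 0`, `u(y) = y^{b-1} e^{-y}` is a ground state of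
eigenvalue `b`. -/
theorem eigenvalues_of_fiber_operator (b : ℝ) (hb : 1 / 2 < b) (j : ℕ)
    (hj : (j : ℝ) < b - 1 / 2) :
    (∃ u : ℝ → ℂ, ContDiffOn ℝ (⊤ : ℕ∞) u (Set.Ioi 0) ∧ (∃ y > (0 : ℝ), u y ≠ 0) ∧
      MemLp u 2 (volume.restrict (Set.Ioi (0 : ℝ))) ∧
      MemLp (fun y : ℝ => (y : ℂ) * deriv u y) 2 (volume.restrict (Set.Ioi (0 : ℝ))) ∧
      ∀ y > (0 : ℝ), Pb1 b u y =
        (((2 * (j : ℝ) + 1) * b - (j : ℝ) * ((j : ℝ) + 1) : ℝ) : ℂ) * u y) ∧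
    (j = 0 →
      ∀ u₀ : ℝ → ℂ, u₀ = (fun y : ℝ => ((y ^ (b - 1) * Real.exp (-y) : ℝ) : ℂ)) →
        ContDiffOn ℝ (⊤ : ℕ∞) u₀ (Set.Ioi 0) ∧ (∃ y > (0 : ℝ), u₀ y ≠ 0) ∧
        MemLp u₀ 2 (volume.restrict (Set.Ioi (0 : ℝ))) ∧
        MemLp (fun y : ℝ => (y : ℂ) * deriv u₀ y) 2 (volume.restrict (Set.Ioi (0 : ℝ))) ∧
        ∀ y > (0 : ℝ), Pb1 b u₀ y = (b : ℂ) * u₀ y) := by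
  have h_eigen := isFiberEigenfunction_ladderPoly hj
  refine ⟨⟨_, h_eigen⟩, ?_⟩
  rintro rfl u₀ rfl
  have h_eigenvalue : (2 * ((0 : ℕ) : ℝ) + 1) * b - ((0 : ℕ) : ℝ) * (((0 : ℕ) : ℝ) + 1) = b := by
    simp
  rw [h_eigenvalue, ladderPoly, laguerreFun_one, Nat.cast_zero, sub_zero] at h_eigen
  exact h_eigen
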